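/- Let u(z) = ∫_𝔻 log(|z−ζ|/|1−z·conj(ζ)|) dμ(ζ), where μ is a positive Borel measure on 𝔻 with ∫_𝔻 (1−|ζ|) dμ(ζ) < ∞. Let α ∈ [0,1) and p ∈ (1,∞) satisfy α + 1/p < 1. Suppose the support of μ is contained in a finite union of Stolz angles with vertices on ∂𝔻, i.e. there exist finitely many points ζ₁,…,ζ_N ∈ ∂𝔻 and a constant c ≥ 1 such that supp μ ⊆ ⋃_{j=1}^N {z ∈ 𝔻 : |ζ_j − z| ≤ c(1−|z|)}. Then m_p(r,u) = O((1−r)^{−α}) as r ↑ 1 if and only if n(r,u) := μ(closed disc of radius r centered at 0) = O((1−r)^{−α−1/p}) as r ↑ 1. -/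

import Mathlib

open MeasureTheory Complex

/-- The `p`-th integral mean `m_p(r,u) = ((1/2π) ∫₀^{2π} |u(re^{iθ})|^p dθ)^{1/p}`. -/
noncomputable def mpMean (p r : ℝ) (u : ℂ → ℝ) : ℝ :=
  ((1 / (2 * Real.pi)) *
      ∫ θ in (0 : ℝ)..(2 * Real.pi),
        |u ((r : ℂ) * Complex.exp (θ * Complex.I))| ^ p) ^ (1 / p)


noncomputable def gk (z ζ : ℂ) : ℝ := -Real.log (‖z - ζ‖ / ‖1 - z * (starRingEnd ℂ) ζ‖)

lemma gk_id (z ζ : ℂ) : ‖1 - z * (starRingEnd ℂ) ζ‖ ^ 2 = ‖z - ζ‖ ^ 2 + (1 - ‖z‖ ^ 2) * (1 - ‖ζ‖ ^ 2) := by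
  simp only [← Complex.normSq_eq_norm_sq, Complex.normSq_apply]
  simp
  ring

lemma gk_eq {z ζ : ℂ} (h : z ≠ ζ) (hz : ‖z‖ < 1) (hζ : ‖ζ‖ < 1) :
    gk z ζ = 1 / 2 * Real.log (1 + (1 - ‖z‖ ^ 2) * (1 - ‖ζ‖ ^ 2) / ‖z - ζ‖ ^ 2) := by
  have h1 : 0 < ‖z - ζ‖ := norm_pos_iff.2 (sub_ne_zero.2 h)
  have h2 : 0 < ‖1 - z * (starRingEnd ℂ) ζ‖ := by
    have : 0 < ‖1 - z * (starRingEnd ℂ) ζ‖ ^ 2 := by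
      rw [gk_id]
      have : 0 < 1 - ‖z‖ ^ 2 := by nlinarith [norm_nonneg z]
      have : 0 < 1 - ‖ζ‖ ^ 2 := by nlinarith [norm_nonneg ζ]
      positivity
    by_contra h3
    have h4 : ‖1 - z * (starRingEnd ℂ) ζ‖ = 0 := le_antisymm (not_lt.1 h3) (norm_nonneg _)
    rw [h4] at this
    norm_num at this
  have : 1 + (1 - ‖z‖ ^ 2) * (1 - ‖ζ‖ ^ 2) / ‖z - ζ‖ ^ 2
      = (‖z - ζ‖ / ‖1 - z * (starRingEnd ℂ) ζ‖)⁻¹ ^ 2 := by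
    rw [inv_div, div_pow, gk_id]
    field_simp
  rw [this, Real.log_pow, Real.log_inv, gk]
  push_cast
  ring

lemma gk_nonneg {z ζ : ℂ} (hz : ‖z‖ < 1) (hζ : ‖ζ‖ < 1) : 0 ≤ gk z ζ := by
  by_cases h : z = ζ
  · simp [gk, h]
  · rw [gk_eq h hz hζ]
    have h1 : 0 < 1 - ‖z‖ ^ 2 := by nlinarith [norm_nonneg z]
    have h2 : 0 < 1 - ‖ζ‖ ^ 2 := by nlinarith [norm_nonneg ζ]
    have : 0 ≤ Real.log (1 + (1 - ‖z‖ ^ 2) * (1 - ‖ζ‖ ^ 2) / ‖z - ζ‖ ^ 2) := by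
      apply Real.log_nonneg
      have : 0 ≤ (1 - ‖z‖ ^ 2) * (1 - ‖ζ‖ ^ 2) / ‖z - ζ‖ ^ 2 := by positivity
      linarith
    linarith

lemma gk_bd {z ζ : ℂ} {d δ y : ℝ} (h : z ≠ ζ) (hz : ‖z‖ = 1 - d) (hζ : ‖ζ‖ = 1 - δ) (hd : 0 < d) (hδ : 0 < δ)
    (hy : 0 < y) (hyz : y ≤ ‖z - ζ‖) :
    gk z ζ ≤ 1 / 2 * Real.log (1 + 4 * (d * δ) / y ^ 2) := by
  rw [gk_eq h (by linarith) (by linarith)]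
  have hz0 := norm_nonneg z
  have hζ0 := norm_nonneg ζ
  have h1 : 0 ≤ 1 - ‖z‖ ^ 2 := by nlinarith
  have h2 : 0 ≤ 1 - ‖ζ‖ ^ 2 := by nlinarith
  have h3 : 1 - ‖z‖ ^ 2 ≤ 2 * d := by nlinarith
  have h4 : 1 - ‖ζ‖ ^ 2 ≤ 2 * δ := by nlinarith
  have h5 : (1 - ‖z‖ ^ 2) * (1 - ‖ζ‖ ^ 2) ≤ 4 * (d * δ) := by nlinarith
  have h6 : (1 - ‖z‖ ^ 2) * (1 - ‖ζ‖ ^ 2) / ‖z - ζ‖ ^ 2 ≤ 4 * (d * δ) / y ^ 2 := by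
    gcongr
  have : 0 ≤ (1 - ‖z‖ ^ 2) * (1 - ‖ζ‖ ^ 2) / ‖z - ζ‖ ^ 2 := by positivity
  gcongr

lemma dist_lower {r θ t : ℝ} {ζ : ℂ} (hr : 1 / 2 ≤ r) (ht : |t| ≤ Real.pi)
    (hθ : ∃ n : ℤ, θ = ζ.arg + t + n * (2 * Real.pi)) :
    |t| / 7 ≤ ‖(r : ℂ) * Complex.exp (θ * Complex.I) - ζ‖ := by
  obtain ⟨n, hn⟩ := hθ
  set z := (r : ℂ) * Complex.exp (θ * Complex.I)
  set v := (r : ℂ) * Complex.exp (ζ.arg * Complex.I)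
  have hexp : Complex.exp (θ * Complex.I) = Complex.exp (ζ.arg * Complex.I) * Complex.exp (I * t) := by
    rw [hn, ← Complex.exp_add]
    rw [← (Complex.exp_periodic.int_mul n) (ζ.arg * I + I * t)]
    congr 1
    push_cast
    ring
  have hzn : ‖z‖ = r := by
    simp only [z, norm_mul, Complex.norm_exp_ofReal_mul_I, Complex.norm_real]
    simp; linarith
  have h1 : ‖z - v‖ = r * ‖2 * Real.sin (t / 2)‖ := by
    have : z - v = r * Complex.exp (ζ.arg * Complex.I) * (Complex.exp (I * t) - 1) := by
      simp only [z, v, hexp]; ring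
    rw [this, norm_mul, norm_mul, Complex.norm_exp_ofReal_mul_I, Complex.norm_exp_I_mul_ofReal_sub_one, Complex.norm_real]
    simp; left; linarith
  have h2 : ‖ζ - v‖ ≤ ‖z - ζ‖ := by
    have : ζ - v = ((‖ζ‖ - r : ℝ) : ℂ) * Complex.exp (ζ.arg * Complex.I) := by
      have e := Complex.norm_mul_exp_arg_mul_I ζ
      have : ζ - v = ‖ζ‖ * Complex.exp (ζ.arg * Complex.I) - v := by rw [e]
      rw [this]
      simp only [v]; push_cast; ring
    rw [this, norm_mul, Complex.norm_exp_ofReal_mul_I, Complex.norm_real, mul_one, ← hzn, norm_sub_rev z]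
    exact abs_norm_sub_norm_le ζ z
  have h3 : ‖z - v‖ ≤ ‖z - ζ‖ + ‖ζ - v‖ := norm_sub_le_norm_sub_add_norm_sub z ζ v
  have h4 : |t| / Real.pi ≤ |Real.sin (t / 2)| := by
    have := Real.mul_le_sin (x := |t| / 2) (by positivity) (by linarith)
    have e : |Real.sin (t/2)| = |Real.sin (|t|/2)| := by
      rcases abs_cases t with ⟨h, _⟩ | ⟨h, _⟩
      · rw [h]
      · rw [h, neg_div, Real.sin_neg, abs_neg]
    rw [e]
    refine le_trans ?_ (le_abs_self _)
    refine le_trans (le_of_eq ?_) this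
    have := Real.pi_pos
    field_simp
  have h5 : ‖2 * Real.sin (t / 2)‖ = 2 * |Real.sin (t / 2)| := by simp
  rw [h5] at h1
  have h6 : |t| / 3.5 ≤ |t| / Real.pi := by
    gcongr
    linarith [Real.pi_lt_d2]
  have := abs_nonneg t
  have h7 : |Real.sin (t / 2)| ≤ r * (2 * |Real.sin (t / 2)|) := by
    nlinarith [abs_nonneg (Real.sin (t/2))]
  have h8 : |t| / 3.5 = 2 * (|t| / 7) := by ring
  linarith


noncomputable def hreal (τ : ℝ) : ℝ := if |τ| ≤ 1 then |τ| ^ (-(1/2) : ℝ) else |τ| ^ (-2 : ℝ)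

noncomputable def hfun (τ : ℝ) : ENNReal := if τ = 0 then ⊤ else ENNReal.ofReal (hreal τ)

lemma pt_bound {z ζ : ℂ} {d δ t p m D : ℝ} (hp : 1 < p) (hz : ‖z‖ = 1 - d) (hζ : ‖ζ‖ = 1 - δ)
    (hd : 0 < d) (hδ : 0 < δ) (ht : t ≠ 0) (hty : |t| / 7 ≤ ‖z - ζ‖)
    (hm : m = min d δ) (hD : D = max d δ) :
    gk z ζ ^ p ≤ (200 + 4 * p) ^ p * (m / D) ^ p * hreal (t / D) := by
  have hm0 : 0 < m := by rw [hm]; exact lt_min hd hδ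
  have hD0 : 0 < D := by rw [hD]; exact lt_max_of_lt_left hd
  have hmD : m * D = d * δ := by rw [hm, hD]; exact min_mul_max d δ
  have ht0 : 0 < |t| := abs_pos.2 ht
  have hne : z ≠ ζ := by
    rintro rfl
    simp at hty
    linarith
  have hg0 : 0 ≤ gk z ζ := gk_nonneg (by linarith) (by linarith)
  have hτ : |t / D| = |t| / D := by rw [abs_div, abs_of_pos hD0]
  have hsq : |t| ^ 2 ≠ 0 := by positivity
  have hlogle : ∀ x : ℝ, 0 ≤ x → Real.log (1 + x) ≤ x := fun x hx => by
    have := Real.log_le_sub_one_of_pos (x := 1 + x) (by linarith)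
    linarith
  set τ := |t| / D with hτd
  have hτ0 : 0 < τ := by positivity
  unfold hreal
  rw [hτ]
  split_ifs with h
  · have key : gk z ζ ≤ (200 + 4 * p) * (m / D) * τ ^ (-(1 / (2 * p))) := by
      have hτ1 : 1 ≤ τ ^ (-(1 / (2 * p))) :=
        Real.one_le_rpow_of_pos_of_le_one_of_nonpos hτ0 h (by
          have : 0 < 1 / (2 * p) := by positivity
          linarith)
      rcases le_total m (D / 2) with hc | hc
      · have hy : D / 2 ≤ ‖z - ζ‖ := by
          have h1 := abs_norm_sub_norm_le z ζ
          rw [hz, hζ] at h1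
          have : D - m ≤ |1 - d - (1 - δ)| := by
            rw [hm, hD, max_sub_min_eq_abs]
            apply le_of_eq; congr 1; ring
          linarith
        have h1 := gk_bd hne hz hζ hd hδ (half_pos hD0) hy
        have h2 := hlogle (4 * (d * δ) / (D / 2) ^ 2) (by positivity)
        rw [← hmD] at h1 h2
        have h3 : 4 * (m * D) / (D / 2) ^ 2 = 16 * (m / D) := by field_simp; ring
        have h4 : 0 < m / D := by positivity
        calc gk z ζ ≤ 8 * (m / D) := by linarith
          _ ≤ (200 + 4 * p) * (m / D) := by gcongr; linarith
          _ ≤ _ := by apply le_mul_of_one_le_right _ hτ1; positivity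
      · have h1 := gk_bd hne hz hζ hd hδ (by positivity) hty
        have hX : 4 * (d * δ) / (|t| / 7) ^ 2 ≤ 196 * τ⁻¹ ^ 2 := by
          have : 196 * τ⁻¹ ^ 2 = 4 * (D * D) / (|t| / 7) ^ 2 := by
            rw [hτd]; field_simp; ring
          rw [this]
          gcongr
          · rw [hD]; exact le_max_left _ _
          · rw [hD]; exact le_max_right _ _
        have hτi : 1 ≤ τ⁻¹ := (one_le_inv₀ hτ0).2 h
        have h2 : Real.log (1 + 4 * (d * δ) / (|t| / 7) ^ 2) ≤ Real.log (197 * τ⁻¹ ^ 2) := by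
          apply Real.log_le_log (by positivity)
          nlinarith
        have h3 : Real.log (197 * τ⁻¹ ^ 2) = Real.log 197 + 2 * Real.log τ⁻¹ := by
          rw [Real.log_mul (by norm_num) (by positivity), Real.log_pow]; norm_num
        have h4 := Real.log_le_rpow_div (x := τ⁻¹) (ε := 1 / (2 * p)) (by positivity) (by positivity)
        have h5 : τ⁻¹ ^ (1 / (2 * p)) = τ ^ (-(1 / (2 * p))) := by
          rw [Real.inv_rpow hτ0.le, Real.rpow_neg hτ0.le]
        have h6 : Real.log 197 ≤ 196 := by
          have := hlogle 196 (by norm_num); norm_num at this; linarith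
        rw [h5] at h4
        set s := τ ^ (-(1 / (2 * p))) with hs
        have h7 : s / (1 / (2 * p)) = 2 * p * s := by field_simp
        have h8 : gk z ζ ≤ (100 + 2 * p) * s := by
          nlinarith
        have h9 : 1 ≤ 2 * (m / D) := by
          rw [← mul_div_assoc, le_div_iff₀ hD0]; linarith
        calc gk z ζ ≤ ((100 + 2 * p) * s) * 1 := by linarith
          _ ≤ ((100 + 2 * p) * s) * (2 * (m / D)) := by gcongr
          _ = _ := by ring
    calc gk z ζ ^ p ≤ ((200 + 4 * p) * (m / D) * τ ^ (-(1 / (2 * p)))) ^ p := by gcongr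
      _ = _ := by
        rw [Real.mul_rpow (by positivity) (by positivity), Real.mul_rpow (by positivity) (by positivity),
          ← Real.rpow_mul hτ0.le]
        congr 2
        field_simp
  · push Not at h
    have h1 := gk_bd hne hz hζ hd hδ (by positivity) hty
    have h2 := hlogle (4 * (d * δ) / (|t| / 7) ^ 2) (by positivity)
    have h3 : 4 * (d * δ) / (|t| / 7) ^ 2 = 196 * (m / D) * τ ^ (-2 : ℝ) := by
      rw [← hmD, Real.rpow_neg hτ0.le, hτd]
      norm_cast
      field_simp; ring
    have h4 : gk z ζ ≤ (200 + 4 * p) * (m / D) * τ ^ (-2 : ℝ) := by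
      have : 0 ≤ (m / D) * τ ^ (-2 : ℝ) := by positivity
      nlinarith
    have h5 : (τ ^ (-2 : ℝ)) ^ p ≤ τ ^ (-2 : ℝ) := by
      rw [← Real.rpow_mul hτ0.le]
      apply Real.rpow_le_rpow_of_exponent_le h.le
      nlinarith
    calc gk z ζ ^ p ≤ ((200 + 4 * p) * (m / D) * τ ^ (-2 : ℝ)) ^ p := by gcongr
      _ = (200 + 4 * p) ^ p * (m / D) ^ p * (τ ^ (-2 : ℝ)) ^ p := by
        rw [Real.mul_rpow (by positivity) (by positivity), Real.mul_rpow (by positivity) (by positivity)]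
      _ ≤ _ := by gcongr

lemma measurable_hreal : Measurable hreal := by
  unfold hreal
  apply Measurable.ite
  · exact measurableSet_le (by fun_prop) (by fun_prop)
  · fun_prop
  · fun_prop

lemma measurable_hfun : Measurable hfun := by
  unfold hfun
  apply Measurable.ite
  · exact measurableSet_singleton _
  · fun_prop
  · exact measurable_hreal.ennreal_ofReal

lemma hfun_neg (τ : ℝ) : hfun (-τ) = hfun τ := by
  unfold hfun hreal; simp

lemma hfun_lint : ∫⁻ τ, hfun τ < ⊤ := by
  have h1 : ∫⁻ τ in Set.Ioi 0, hfun τ < ⊤ := by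
    have e : Set.Ioi (0:ℝ) = Set.Ioc 0 1 ∪ Set.Ioi 1 := by
      rw [Set.Ioc_union_Ioi_eq_Ioi]; norm_num
    rw [e]
    refine lt_of_le_of_lt (lintegral_union_le _ _ _) (ENNReal.add_lt_top.2 ⟨?_, ?_⟩)
    · have : IntegrableOn (fun x : ℝ => x ^ (-(1/2) : ℝ)) (Set.Ioc 0 1) := by
        have := intervalIntegral.intervalIntegrable_rpow' (a := 0) (b := 1) (r := -(1/2)) (by norm_num)
        rwa [intervalIntegrable_iff_integrableOn_Ioc_of_le zero_le_one] at this
      refine lt_of_le_of_lt (le_of_eq ?_) this.lintegral_lt_top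
      apply setLIntegral_congr_fun measurableSet_Ioc
      intro x hx
      simp [hfun, hreal, hx.1.ne', abs_of_pos hx.1, hx.2]
    · have := integrableOn_Ioi_rpow_of_lt (a := -2) (by norm_num) (c := 1) (by norm_num)
      refine lt_of_le_of_lt (le_of_eq ?_) this.lintegral_lt_top
      apply setLIntegral_congr_fun measurableSet_Ioi
      intro x hx
      have hx : 1 < x := hx
      have hx0 : 0 < x := by linarith
      simp [hfun, hreal, hx0.ne', abs_of_pos hx0, hx.not_ge]
  have h2 : ∫⁻ τ in Set.Iio 0, hfun τ < ⊤ := by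
    refine lt_of_le_of_lt (le_of_eq ?_) h1
    have := (Measure.measurePreserving_neg (volume : Measure ℝ)).setLIntegral_comp_preimage (measurableSet_Ioi (a := (0:ℝ))) measurable_hfun
    rw [← this]
    simp [hfun_neg]
  have h3 : ∫⁻ τ in Set.Iic 0, hfun τ = ∫⁻ τ in Set.Iio 0, hfun τ := setLIntegral_congr Iio_ae_eq_Iic.symm
  rw [← lintegral_add_compl _ (measurableSet_Ioi (a := (0:ℝ))), Set.compl_Ioi, h3]
  exact ENNReal.add_lt_top.2 ⟨h1, h2⟩

lemma hfun_scale {D : ℝ} (hD : 0 < D) (b : ℝ) :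
    ∫⁻ t, hfun ((t - b) / D) = ENNReal.ofReal D * ∫⁻ τ, hfun τ := by
  rw [lintegral_sub_right_eq_self (fun t => hfun (t / D)) b]
  have := Real.map_volume_mul_left (a := D⁻¹) (by positivity)
  simp only [div_eq_inv_mul]
  rw [← lintegral_map (f := hfun) (g := fun t => D⁻¹ * t) measurable_hfun (by fun_prop), this]
  simp [abs_of_pos hD]


noncomputable def wfun (p d δ : ℝ) : ℝ := min d δ * max d δ ^ (1 / p - 1)

lemma measurable_wfun (p d : ℝ) : Measurable (wfun p d) := by unfold wfun; fun_prop

lemma wfun_pos {p d δ : ℝ} (hd : 0 < d) (hδ : 0 < δ) : 0 < wfun p d δ := by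
  unfold wfun
  have : 0 < min d δ := lt_min hd hδ
  have : 0 < max d δ := lt_max_of_lt_left hd
  positivity

noncomputable def circ (r θ : ℝ) : ℂ := (r : ℂ) * Complex.exp (θ * Complex.I)

lemma norm_circ {r : ℝ} (hr : 0 ≤ r) (θ : ℝ) : ‖circ r θ‖ = r := by
  simp only [circ, norm_mul, Complex.norm_exp_ofReal_mul_I, Complex.norm_real]
  simp [abs_of_nonneg hr]

lemma kernel_int {p r : ℝ} {ζ : ℂ} (hp : 1 < p) (hr : 1 / 2 ≤ r) (hr1 : r < 1) (hζ : ‖ζ‖ < 1) :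
    ∫⁻ θ in Set.Ioc 0 (2 * Real.pi), ENNReal.ofReal (gk (circ r θ) ζ) ^ p ≤
      (2 * ENNReal.ofReal ((200 + 4 * p) ^ p) * ∫⁻ τ, hfun τ) *
        ENNReal.ofReal (wfun p (1 - r) (1 - ‖ζ‖)) ^ p := by
  set d := 1 - r with hd
  set δ := 1 - ‖ζ‖ with hδ
  have hd0 : 0 < d := by linarith
  have hδ0 : 0 < δ := by linarith
  set m := min d δ with hm
  set D := max d δ with hD
  have hm0 : 0 < m := lt_min hd0 hδ0
  have hD0 : 0 < D := lt_max_of_lt_left hd0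
  set A := ENNReal.ofReal ((200 + 4 * p) ^ p * (m / D) ^ p) with hA
  have hA0 : A ≠ 0 := by
    rw [hA]; simp only [ne_eq, ENNReal.ofReal_eq_zero, not_le]; positivity
  have one : ∀ θ t : ℝ, |t| ≤ Real.pi → (∃ n : ℤ, θ = ζ.arg + t + n * (2 * Real.pi)) →
      ENNReal.ofReal (gk (circ r θ) ζ) ^ p ≤ A * hfun (t / D) := by
    intro θ t ht hθ
    by_cases h0 : t = 0
    · simp [h0, hfun, ENNReal.mul_top hA0]
    have h1 := dist_lower hr ht hθ
    have h2 := pt_bound (z := circ r θ) (ζ := ζ) (d := d) (δ := δ) (p := p) hp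
      (by rw [norm_circ (by linarith)]; ring) (by rw [hδ]; ring) hd0 hδ0 h0 h1 hm hD
    have h3 : 0 ≤ gk (circ r θ) ζ := gk_nonneg (by rw [norm_circ (by linarith)]; exact hr1) hζ
    rw [ENNReal.ofReal_rpow_of_nonneg h3 (by linarith), hfun, if_neg (div_ne_zero h0 hD0.ne'), hA,
      ← ENNReal.ofReal_mul (by positivity)]
    exact ENNReal.ofReal_le_ofReal h2
  have hpi := Real.pi_pos
  calc ∫⁻ θ in Set.Ioc 0 (2 * Real.pi), ENNReal.ofReal (gk (circ r θ) ζ) ^ p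
      ≤ ∫⁻ θ in Set.Ioc 0 (2 * Real.pi), (A * hfun ((θ - ζ.arg) / D) + A * hfun ((θ - (ζ.arg + 2 * Real.pi)) / D)) := by
        apply setLIntegral_mono' measurableSet_Ioc
        intro θ hθ
        have a1 := Complex.neg_pi_lt_arg ζ
        have a2 := Complex.arg_le_pi ζ
        have b1 := hθ.1
        have b2 := hθ.2
        by_cases hc : θ - ζ.arg ≤ Real.pi
        · refine le_trans (one θ (θ - ζ.arg) (abs_le.2 ⟨by linarith, hc⟩) ⟨0, by simp⟩) le_self_add
        · push Not at hc
          refine le_trans (one θ (θ - (ζ.arg + 2 * Real.pi)) (abs_le.2 ⟨by linarith, by linarith⟩) ⟨1, by push_cast; ring⟩) le_add_self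
    _ ≤ ∫⁻ θ, (A * hfun ((θ - ζ.arg) / D) + A * hfun ((θ - (ζ.arg + 2 * Real.pi)) / D)) :=
        setLIntegral_le_lintegral _ _
    _ = 2 * (A * (ENNReal.ofReal D * ∫⁻ τ, hfun τ)) := by
        have hmm : ∀ b : ℝ, Measurable (fun θ : ℝ => hfun ((θ - b) / D)) := fun b =>
          measurable_hfun.comp (by fun_prop)
        rw [lintegral_add_left ((hmm _).const_mul _), lintegral_const_mul _ (hmm _),
          lintegral_const_mul _ (hmm _), hfun_scale hD0, hfun_scale hD0, two_mul]
    _ = _ := by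
        have : ENNReal.ofReal (wfun p d δ) ^ p = ENNReal.ofReal ((m / D) ^ p) * ENNReal.ofReal D := by
          rw [ENNReal.ofReal_rpow_of_nonneg (wfun_pos hd0 hδ0).le (by linarith), ← ENNReal.ofReal_mul (by positivity)]
          congr 1
          rw [wfun, ← hm, ← hD, Real.mul_rpow hm0.le (by positivity), ← Real.rpow_mul hD0.le, Real.div_rpow hm0.le hD0.le]
          have : (1 / p - 1) * p = 1 - p := by field_simp
          rw [this, Real.rpow_sub hD0, Real.rpow_one]
          ring
        rw [this, hA, ENNReal.ofReal_mul (by positivity)]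
        ring

lemma minkowski {p : ℝ} (hp : 1 < p) {α β : Type*} [MeasurableSpace α] [MeasurableSpace β]
    (ν : Measure β) [SFinite ν] (κ : Measure α) [SFinite κ] (K : α → β → ENNReal)
    (hK : Measurable (Function.uncurry K)) (w : β → ENNReal) (hw : Measurable w)
    (hw0 : ∀ᵐ b ∂ν, w b ≠ 0 ∧ w b ≠ ⊤) (C : ENNReal)
    (hb : ∀ᵐ b ∂ν, ∫⁻ a, K a b ^ p ∂κ ≤ C * w b ^ p) :
    ∫⁻ a, (∫⁻ b, K a b ∂ν) ^ p ∂κ ≤ C * (∫⁻ b, w b ∂ν) ^ p := by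
  have hp0 : 0 < p := by linarith
  set q := Real.conjExponent p with hq
  have hpq : p.HolderConjugate q := Real.HolderConjugate.conjExponent hp
  have hq0 : 0 < q := hpq.symm.pos
  have hpq1 : p / q = p - 1 := by
    rw [hq, Real.conjExponent]; have : p - 1 ≠ 0 := by linarith
    field_simp
  have step : ∀ a, (∫⁻ b, K a b ∂ν) ^ p ≤ (∫⁻ b, K a b ^ p * w b ^ (1 - p) ∂ν) * (∫⁻ b, w b ∂ν) ^ (p - 1) := by
    intro a
    have hKa : Measurable (K a) := hK.comp measurable_prodMk_left
    have e1 : ∫⁻ b, K a b ∂ν = ∫⁻ b, ((fun b => K a b * w b ^ (-(1 / q))) * (fun b => w b ^ (1 / q))) b ∂ν := by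
      apply lintegral_congr_ae
      filter_upwards [hw0] with b hb
      simp only [Pi.mul_apply]
      rw [mul_assoc, ← ENNReal.rpow_add _ _ hb.1 hb.2]
      simp
    have h1 := ENNReal.lintegral_mul_le_Lp_mul_Lq ν hpq (f := fun b => K a b * w b ^ (-(1 / q)))
      (g := fun b => w b ^ (1 / q)) (by fun_prop) (by fun_prop)
    rw [← e1] at h1
    calc (∫⁻ b, K a b ∂ν) ^ p ≤ _ := ENNReal.rpow_le_rpow h1 hp0.le
      _ = _ := by
        rw [ENNReal.mul_rpow_of_nonneg _ _ hp0.le, ← ENNReal.rpow_mul, ← ENNReal.rpow_mul]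
        congr 1
        · rw [one_div_mul_cancel hp0.ne', ENNReal.rpow_one]
          apply lintegral_congr
          intro b
          rw [ENNReal.mul_rpow_of_nonneg _ _ hp0.le, ← ENNReal.rpow_mul]
          congr 2
          have : -(1 / q) * p = - (p / q) := by ring
          rw [this, hpq1]; ring
        · have : 1 / q * p = p - 1 := by rw [← hpq1]; ring
          rw [this]
          congr 1
          apply lintegral_congr
          intro b
          rw [← ENNReal.rpow_mul, one_div_mul_cancel hq0.ne', ENNReal.rpow_one]
  have hm2 : Measurable (Function.uncurry fun a b => K a b ^ p * w b ^ (1 - p)) := by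
    have : Measurable fun x : α × β => K x.1 x.2 := hK
    unfold Function.uncurry
    fun_prop
  calc ∫⁻ a, (∫⁻ b, K a b ∂ν) ^ p ∂κ
      ≤ ∫⁻ a, (∫⁻ b, K a b ^ p * w b ^ (1 - p) ∂ν) * (∫⁻ b, w b ∂ν) ^ (p - 1) ∂κ := lintegral_mono step
    _ = (∫⁻ a, (∫⁻ b, K a b ^ p * w b ^ (1 - p) ∂ν) ∂κ) * (∫⁻ b, w b ∂ν) ^ (p - 1) := by
        rw [lintegral_mul_const]
        exact hm2.lintegral_prod_right
    _ = (∫⁻ b, (∫⁻ a, K a b ^ p * w b ^ (1 - p) ∂κ) ∂ν) * (∫⁻ b, w b ∂ν) ^ (p - 1) := by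
        rw [lintegral_lintegral_swap hm2.aemeasurable]
    _ ≤ (∫⁻ b, C * w b ∂ν) * (∫⁻ b, w b ∂ν) ^ (p - 1) := by
        gcongr ?_ * _
        apply lintegral_mono_ae
        filter_upwards [hw0, hb] with b h0 h1
        have hKb : Measurable (fun a => K a b) := hK.comp measurable_prodMk_right
        rw [lintegral_mul_const _ (by fun_prop)]
        calc _ ≤ C * w b ^ p * w b ^ (1 - p) := by gcongr
          _ = _ := by
            rw [mul_assoc, ← ENNReal.rpow_add _ _ h0.1 h0.2]; simp
    _ = _ := by
        rw [lintegral_const_mul _ hw, mul_assoc]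
        congr 1
        nth_rewrite 1 [← ENNReal.rpow_one (∫⁻ b, w b ∂ν)]
        rw [← ENNReal.rpow_add_of_nonneg _ _ zero_le_one (by linarith)]
        simp


lemma ball_fin (ν : Measure ℂ) (hfin : ∫⁻ ζ, ENNReal.ofReal (1 - ‖ζ‖) ∂ν < ⊤) {r : ℝ} (hr : r < 1) :
    ν (Metric.closedBall 0 r) < ⊤ := by
  have h := mul_meas_ge_le_lintegral (μ := ν) (f := fun ζ : ℂ => ENNReal.ofReal (1 - ‖ζ‖)) (by fun_prop)
    (ENNReal.ofReal (1 - r))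
  have hsub : ν (Metric.closedBall 0 r) ≤ ν {x | ENNReal.ofReal (1 - r) ≤ ENNReal.ofReal (1 - ‖x‖)} := by
    apply measure_mono
    intro x hx
    have : ‖x‖ ≤ r := by simpa using hx
    exact ENNReal.ofReal_le_ofReal (by linarith)
  refine lt_of_le_of_lt hsub ?_
  have h2 := lt_of_le_of_lt h hfin
  by_contra h3
  rw [not_lt, top_le_iff] at h3
  rw [h3, ENNReal.mul_top] at h2
  · exact lt_irrefl _ h2
  · simp; linarith

lemma ν_sigma (ν : Measure ℂ) (hν : ∀ᵐ ζ ∂ν, ‖ζ‖ < 1)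
    (hfin : ∫⁻ ζ, ENNReal.ofReal (1 - ‖ζ‖) ∂ν < ⊤) : SigmaFinite ν := by
  refine ⟨⟨⟨fun n => Metric.closedBall 0 (1 - 1 / ((n : ℝ) + 1)) ∪ {ζ | ¬ ‖ζ‖ < 1}, fun _ => trivial, fun n => ?_, ?_⟩⟩⟩
  · refine lt_of_le_of_lt (measure_union_le _ _) ?_
    have h0 : ν {ζ | ¬ ‖ζ‖ < 1} = 0 := hν
    rw [h0, add_zero]
    apply ball_fin ν hfin
    have : 0 < 1 / ((n : ℝ) + 1) := by positivity
    linarith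
  · rw [Set.eq_univ_iff_forall]
    intro ζ
    rw [Set.mem_iUnion]
    by_cases h : ‖ζ‖ < 1
    · obtain ⟨n, hn⟩ := exists_nat_one_div_lt (sub_pos.2 h)
      refine ⟨n, Or.inl ?_⟩
      simp only [Metric.mem_closedBall, dist_zero_right]
      linarith
    · exact ⟨0, Or.inr h⟩

lemma measurable_gk : Measurable (fun x : ℂ × ℂ => gk x.1 x.2) := by
  unfold gk
  apply Measurable.neg
  apply Real.measurable_log.comp
  apply Measurable.div
  · fun_prop
  · have : Continuous fun x : ℂ × ℂ => ‖1 - x.1 * (starRingEnd ℂ) x.2‖ := by fun_prop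
    exact this.measurable

lemma measurable_circ (r : ℝ) : Measurable (circ r) := by
  have : Continuous (circ r) := by unfold circ; fun_prop
  exact this.measurable

noncomputable def Fpot (ν : Measure ℂ) (z : ℂ) : ENNReal := ∫⁻ ζ, ENNReal.ofReal (gk z ζ) ∂ν

lemma main_upper {p : ℝ} (hp : 1 < p) (ν : Measure ℂ) (hν : ∀ᵐ ζ ∂ν, ‖ζ‖ < 1)
    (hfin : ∫⁻ ζ, ENNReal.ofReal (1 - ‖ζ‖) ∂ν < ⊤) :
    ∃ C : ENNReal, C < ⊤ ∧ ∀ r : ℝ, 1 / 2 ≤ r → r < 1 →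
      ∫⁻ θ in Set.Ioc 0 (2 * Real.pi), Fpot ν (circ r θ) ^ p ≤
        C * (∫⁻ ζ, ENNReal.ofReal (wfun p (1 - r) (1 - ‖ζ‖)) ∂ν) ^ p := by
  have := ν_sigma ν hν hfin
  refine ⟨2 * ENNReal.ofReal ((200 + 4 * p) ^ p) * ∫⁻ τ, hfun τ, ?_, ?_⟩
  · exact ENNReal.mul_lt_top (ENNReal.mul_lt_top (by simp) ENNReal.ofReal_lt_top) hfun_lint
  · intro r hr hr1
    have hm1 : Measurable (fun x : ℝ × ℂ => (circ r x.1, x.2)) :=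
      ((measurable_circ r).comp measurable_fst).prodMk measurable_snd
    have hm2 : Measurable (fun x : ℝ × ℂ => gk (circ r x.1) x.2) :=
      Measurable.comp (g := fun x : ℂ × ℂ => gk x.1 x.2) (f := fun x : ℝ × ℂ => (circ r x.1, x.2)) measurable_gk hm1
    have hm3 : Measurable (fun ζ : ℂ => 1 - ‖ζ‖) := by fun_prop
    refine minkowski hp ν (volume.restrict (Set.Ioc 0 (2 * Real.pi)))
      (fun θ ζ => ENNReal.ofReal (gk (circ r θ) ζ)) hm2.ennreal_ofReal
      (fun ζ => ENNReal.ofReal (wfun p (1 - r) (1 - ‖ζ‖)))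
      ((measurable_wfun p (1 - r)).comp hm3).ennreal_ofReal ?_ _ ?_
    · filter_upwards [hν] with ζ hζ
      refine ⟨?_, ENNReal.ofReal_ne_top⟩
      simp only [ne_eq, ENNReal.ofReal_eq_zero, not_le]
      exact wfun_pos (by linarith) (by linarith)
    · filter_upwards [hν] with ζ hζ
      exact kernel_int hp hr hr1 hζ

lemma w_fin {p : ℝ} (hp : 1 < p) (ν : Measure ℂ) (hν : ∀ᵐ ζ ∂ν, ‖ζ‖ < 1)
    (hfin : ∫⁻ ζ, ENNReal.ofReal (1 - ‖ζ‖) ∂ν < ⊤) {d : ℝ} (hd : 0 < d) :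
    ∫⁻ ζ, ENNReal.ofReal (wfun p d (1 - ‖ζ‖)) ∂ν < ⊤ := by
  calc ∫⁻ ζ, ENNReal.ofReal (wfun p d (1 - ‖ζ‖)) ∂ν
      ≤ ∫⁻ ζ, ENNReal.ofReal (d ^ (1 / p - 1)) * ENNReal.ofReal (1 - ‖ζ‖) ∂ν := by
        apply lintegral_mono_ae
        filter_upwards [hν] with ζ hζ
        rw [← ENNReal.ofReal_mul (by positivity)]
        apply ENNReal.ofReal_le_ofReal
        rw [wfun, mul_comm]
        have h1 : max d (1 - ‖ζ‖) ^ (1 / p - 1) ≤ d ^ (1 / p - 1) := by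
          apply Real.rpow_le_rpow_of_nonpos hd (le_max_left _ _)
          have : 1 / p < 1 := by rw [div_lt_one (by linarith)]; exact hp
          linarith
        have h2 := min_le_right d (1 - ‖ζ‖)
        have h3 : 0 ≤ min d (1 - ‖ζ‖) := le_min hd.le (by linarith)
        gcongr
    _ < ⊤ := by
        rw [lintegral_const_mul _ (by fun_prop)]
        exact ENNReal.mul_lt_top ENNReal.ofReal_lt_top hfin

lemma w_int {p α β : ℝ} (hp : 1 < p) (hβ : β = α + 1 / p) (hβ0 : 0 < β) (hβ1 : β < 1)
    (ν : Measure ℂ) (hν : ∀ᵐ ζ ∂ν, ‖ζ‖ < 1)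
    (C : ℝ) (hC : 0 ≤ C) (hn : ∀ s : ℝ, 0 < s → ν (Metric.closedBall 0 (1 - s)) ≤ ENNReal.ofReal (C * s ^ (-β))) :
    ∃ M : ℝ, 0 ≤ M ∧ ∀ d : ℝ, 0 < d →
      ∫⁻ ζ, ENNReal.ofReal (wfun p d (1 - ‖ζ‖)) ∂ν ≤ ENNReal.ofReal (M * d ^ (-α)) := by
  set a : ℝ := 2 ^ (1 / p - 1 - β) with ha
  set b : ℝ := 1 / 2 * (1 / 2) ^ (-β) with hb
  have h1p : 1 / p < 1 := by rw [div_lt_one (by linarith)]; exact hp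
  have ha0 : 0 < a := by positivity
  have ha1 : a < 1 := Real.rpow_lt_one_of_one_lt_of_neg (by norm_num) (by linarith)
  have hb0 : 0 < b := by positivity
  have hb1 : b < 1 := by
    have : b = (1 / 2) ^ (1 - β) := by
      rw [hb, sub_eq_add_neg, Real.rpow_add (by norm_num), Real.rpow_one]
    rw [this]
    exact Real.rpow_lt_one (by norm_num) (by norm_num) (by linarith)
  set T : ℝ := C * (1 / 2) ^ (-β) with hT
  have hsum : Summable fun k : ℕ => C * a ^ k + T * b ^ k :=
    ((summable_geometric_of_lt_one ha0.le ha1).mul_left _).add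
      ((summable_geometric_of_lt_one hb0.le hb1).mul_left _)
  have hT0 : 0 ≤ T := by positivity
  refine ⟨∑' k : ℕ, (C * a ^ k + T * b ^ k), tsum_nonneg fun k => by positivity, fun d hd => ?_⟩
  have hms : ∀ s : ℝ, MeasurableSet (Metric.closedBall (0:ℂ) s) := fun s => Metric.isClosed_closedBall.measurableSet
  calc ∫⁻ ζ, ENNReal.ofReal (wfun p d (1 - ‖ζ‖)) ∂ν
      ≤ ∫⁻ ζ, ∑' k : ℕ,
        ((Metric.closedBall (0:ℂ) (1 - 2 ^ k * d)).indicator (fun _ => ENNReal.ofReal (d * (2 ^ k * d) ^ (1 / p - 1))) ζ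
        + (Metric.closedBall (0:ℂ) (1 - (1/2) ^ (k+1) * d)).indicator (fun _ => ENNReal.ofReal ((1/2) ^ k * d * d ^ (1 / p - 1))) ζ) ∂ν := by
        apply lintegral_mono_ae
        filter_upwards [hν] with ζ hζ
        set δ := 1 - ‖ζ‖ with hδ
        have hδ0 : 0 < δ := by linarith
        rcases le_total d δ with h | h
        · obtain ⟨k, hk1, hk2⟩ := exists_nat_pow_near (x := δ / d) (y := 2) (by rwa [one_le_div hd]) (by norm_num)
          rw [le_div_iff₀ hd] at hk1
          refine le_trans ?_ (ENNReal.le_tsum k)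
          refine le_trans ?_ le_self_add
          rw [Set.indicator_of_mem (by simp only [Metric.mem_closedBall, dist_zero_right]; linarith)]
          apply ENNReal.ofReal_le_ofReal
          rw [wfun, min_eq_left h, max_eq_right h]
          gcongr 1
          exact Real.rpow_le_rpow_of_nonpos (by positivity) hk1 (by linarith)
        · obtain ⟨k, hk1, hk2⟩ := exists_nat_pow_near_of_lt_one (x := δ / d) (y := 1 / 2) (by positivity) (by rwa [div_le_one hd]) (by norm_num) (by norm_num)
          rw [lt_div_iff₀ hd] at hk1
          rw [div_le_iff₀ hd] at hk2
          refine le_trans ?_ (ENNReal.le_tsum k)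
          refine le_trans ?_ le_add_self
          rw [Set.indicator_of_mem (by simp only [Metric.mem_closedBall, dist_zero_right]; linarith)]
          apply ENNReal.ofReal_le_ofReal
          rw [wfun, min_eq_right h, max_eq_left h]
          gcongr
    _ = ∑' k : ℕ, (ENNReal.ofReal (d * (2 ^ k * d) ^ (1 / p - 1)) * ν (Metric.closedBall (0:ℂ) (1 - 2 ^ k * d)) +
        ENNReal.ofReal ((1/2) ^ k * d * d ^ (1 / p - 1)) * ν (Metric.closedBall (0:ℂ) (1 - (1/2) ^ (k+1) * d))) := by
        rw [lintegral_tsum]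
        · congr 1
          ext k
          rw [lintegral_add_left (measurable_const.indicator (hms _)), lintegral_indicator_const (hms _), lintegral_indicator_const (hms _)]
        · intro k
          exact ((measurable_const.indicator (hms _)).add (measurable_const.indicator (hms _))).aemeasurable
    _ ≤ ∑' k : ℕ, ENNReal.ofReal ((C * a ^ k + T * b ^ k) * d ^ (-α)) := by
        apply ENNReal.tsum_le_tsum
        intro k
        rw [add_mul, ENNReal.ofReal_add (by positivity) (by positivity)]
        have hexp : d ^ (-α) = d * d ^ (1 / p - 1) * d ^ (-β) := by
          nth_rewrite 2 [← Real.rpow_one d]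
          rw [← Real.rpow_add hd, ← Real.rpow_add hd, hβ]
          congr 1; ring
        refine add_le_add ?_ ?_
        · refine le_trans (mul_le_mul_right (hn _ (by positivity)) _) ?_
          rw [← ENNReal.ofReal_mul (by positivity)]
          apply ENNReal.ofReal_le_ofReal
          apply le_of_eq
          have e : a ^ k = (2 ^ k) ^ (1 / p - 1) * (2 ^ k) ^ (-β) := by
            rw [ha, Real.rpow_pow_comm (by norm_num), ← Real.rpow_add (by positivity), sub_eq_add_neg (1/p - 1)]
          rw [hexp, e, Real.mul_rpow (by positivity) hd.le, Real.mul_rpow (by positivity) hd.le]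
          ring
        · refine le_trans (mul_le_mul_right (hn _ (by positivity)) _) ?_
          rw [← ENNReal.ofReal_mul (by positivity)]
          apply ENNReal.ofReal_le_ofReal
          apply le_of_eq
          have e : b ^ k * (1 / 2) ^ (-β) = (1 / 2) ^ k * ((1 / 2) ^ (k + 1)) ^ (-β) := by
            rw [← Real.rpow_pow_comm (by norm_num), hb]
            ring
          rw [hexp, Real.mul_rpow (by positivity) hd.le]
          have : T * b ^ k = C * ((1 / 2) ^ k * ((1 / 2) ^ (k + 1)) ^ (-β)) := by
            rw [← e, hT]; ring
          rw [this]
          ring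
    _ = _ := by
        rw [← ENNReal.ofReal_tsum_of_nonneg (fun k => by positivity) (hsum.mul_right _), tsum_mul_right]

lemma abs_u_eq (ν : Measure ℂ) (hν : ∀ᵐ ζ ∂ν, ‖ζ‖ < 1) {z : ℂ} (hz : ‖z‖ < 1) :
    |∫ ζ, Real.log (‖z - ζ‖ / ‖1 - z * (starRingEnd ℂ) ζ‖) ∂ν| = (Fpot ν z).toReal := by
  have hm : Measurable (fun ζ => gk z ζ) :=
    Measurable.comp (g := fun x : ℂ × ℂ => gk x.1 x.2) (f := fun ζ : ℂ => (z, ζ)) measurable_gk measurable_prodMk_left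
  have h1 : ∫ ζ, gk z ζ ∂ν = (Fpot ν z).toReal := by
    rw [integral_eq_lintegral_of_nonneg_ae, Fpot]
    · filter_upwards [hν] with ζ hζ using gk_nonneg hz hζ
    · exact hm.aestronglyMeasurable
  have h2 : ∫ ζ, gk z ζ ∂ν = -∫ ζ, Real.log (‖z - ζ‖ / ‖1 - z * (starRingEnd ℂ) ζ‖) ∂ν := by
    rw [← integral_neg]; rfl
  rw [← h1, h2, ← abs_neg, ← h2, h1, abs_of_nonneg ENNReal.toReal_nonneg]

lemma measurable_Fcirc (ν : Measure ℂ) [SFinite ν] (r : ℝ) : Measurable (fun θ => Fpot ν (circ r θ)) := by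
  have hm1 : Measurable (fun x : ℝ × ℂ => (circ r x.1, x.2)) :=
    ((measurable_circ r).comp measurable_fst).prodMk measurable_snd
  have hm2 : Measurable (fun x : ℝ × ℂ => gk (circ r x.1) x.2) :=
    Measurable.comp (g := fun x : ℂ × ℂ => gk x.1 x.2) (f := fun x : ℝ × ℂ => (circ r x.1, x.2)) measurable_gk hm1
  unfold Fpot
  exact hm2.ennreal_ofReal.lintegral_prod_right'

lemma mp_eq {p r : ℝ} (hp : 1 < p) (hr0 : 0 ≤ r) (hr1 : r < 1) (ν : Measure ℂ) [SFinite ν] (hν : ∀ᵐ ζ ∂ν, ‖ζ‖ < 1)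
    (u : ℂ → ℝ) (hu : ∀ z ∈ Metric.ball (0 : ℂ) 1,
      u z = ∫ ζ, Real.log (‖z - ζ‖ / ‖1 - z * (starRingEnd ℂ) ζ‖) ∂ν)
    (hL : ∫⁻ θ in Set.Ioc 0 (2 * Real.pi), Fpot ν (circ r θ) ^ p < ⊤) :
    mpMean p r u = ((1 / (2 * Real.pi)) * (∫⁻ θ in Set.Ioc 0 (2 * Real.pi), Fpot ν (circ r θ) ^ p).toReal) ^ (1 / p) := by
  rw [mpMean, intervalIntegral.integral_of_le (by positivity)]
  congr 2
  have hm : Measurable (fun θ => Fpot ν (circ r θ) ^ p) := (measurable_Fcirc ν r).pow_const p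
  rw [← integral_toReal hm.aemeasurable (ae_lt_top hm hL.ne)]
  apply integral_congr_ae
  filter_upwards with θ
  have hz : ‖circ r θ‖ < 1 := by rw [norm_circ hr0]; exact hr1
  have := abs_u_eq ν hν hz
  rw [← hu _ (by simpa using hz)] at this
  rw [← ENNReal.toReal_rpow, ← this, circ]

lemma gk_low {z ζ : ℂ} {d κ c : ℝ} (hd : 0 < d) (hd1 : d ≤ 1 / 2) (hc : 1 ≤ c) (hz : ‖z‖ = 1 - d) (h2 : 2 * d ≤ 1 - ‖ζ‖)
    (hy : ‖z - ζ‖ ≤ 6 * c * d) (hκ : κ = 1 / 2 * Real.log (1 + 1 / (18 * c ^ 2))) :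
    κ ≤ gk z ζ := by
  have hne : z ≠ ζ := by rintro rfl; linarith
  have hy0 : 0 < ‖z - ζ‖ := norm_pos_iff.2 (sub_ne_zero.2 hne)
  rw [gk_eq hne (by linarith) (by linarith), hκ]
  have hz0 := norm_nonneg z
  have hζ0 := norm_nonneg ζ
  have h3 : d ≤ 1 - ‖z‖ ^ 2 := by nlinarith
  have h4 : 2 * d ≤ 1 - ‖ζ‖ ^ 2 := by nlinarith
  have h5 : 1 / (18 * c ^ 2) ≤ (1 - ‖z‖ ^ 2) * (1 - ‖ζ‖ ^ 2) / ‖z - ζ‖ ^ 2 := by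
    calc 1 / (18 * c ^ 2) = d * (2 * d) / (6 * c * d) ^ 2 := by field_simp; norm_num
      _ ≤ _ := by
        have : 0 ≤ (1 - ‖z‖ ^ 2) * (1 - ‖ζ‖ ^ 2) := mul_nonneg (by linarith) (by linarith)
        gcongr
        linarith
  gcongr

lemma circ_near {r θ φ : ℝ} (hr0 : 0 ≤ r) (hr1 : r < 1) : ‖circ r θ - Complex.exp (φ * I)‖ ≤ (1 - r) + |θ - φ| := by
  have e : circ r θ - Complex.exp (φ * I) = ((r - 1 : ℝ) : ℂ) * Complex.exp (θ * I) +
      Complex.exp (φ * I) * (Complex.exp (I * ((θ - φ : ℝ) : ℂ)) - 1) := by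
    rw [mul_sub, ← Complex.exp_add, circ]
    have : (φ : ℂ) * I + I * ((θ - φ : ℝ) : ℂ) = θ * I := by push_cast; ring
    rw [this]; push_cast; ring
  rw [e]
  refine le_trans (norm_add_le _ _) ?_
  rw [norm_mul, norm_mul, Complex.norm_exp_ofReal_mul_I, Complex.norm_exp_ofReal_mul_I, Complex.norm_real, mul_one, one_mul]
  refine add_le_add ?_ (Real.norm_exp_I_mul_ofReal_sub_one_le)
  rw [Real.norm_eq_abs, abs_of_nonpos (by linarith)]; linarith

lemma arc_exists {v : ℂ} (hv : ‖v‖ = 1) {r : ℝ} (hr : 1 / 2 ≤ r) (hr1 : r < 1) :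
    ∃ a : ℝ, Set.Ioc a (a + (1 - r)) ⊆ Set.Ioc 0 (2 * Real.pi) ∧
      ∀ θ ∈ Set.Ioc a (a + (1 - r)), ‖circ r θ - v‖ ≤ 2 * (1 - r) := by
  have hv' : v = Complex.exp (v.arg * I) := by
    have := Complex.norm_mul_exp_arg_mul_I v
    rw [hv] at this; simpa using this.symm
  have a1 := Complex.neg_pi_lt_arg v
  have a2 := Complex.arg_le_pi v
  have hpi := Real.pi_gt_three
  by_cases h : 0 < v.arg
  · refine ⟨v.arg, Set.Ioc_subset_Ioc h.le (by linarith), fun θ hθ => ?_⟩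
    have := circ_near (θ := θ) (φ := v.arg) (by linarith : 0 ≤ r) hr1
    rw [← hv'] at this
    have h2 : |θ - v.arg| ≤ 1 - r := abs_le.2 ⟨by linarith [hθ.1], by linarith [hθ.2]⟩
    linarith
  · push Not at h
    refine ⟨v.arg + 2 * Real.pi - (1 - r), Set.Ioc_subset_Ioc (by linarith) (by linarith), fun θ hθ => ?_⟩
    have := circ_near (θ := θ) (φ := v.arg + 2 * Real.pi) (by linarith : 0 ≤ r) hr1
    have e : Complex.exp (((v.arg + 2 * Real.pi : ℝ) : ℂ) * I) = v := by
      rw [hv']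
      rw [← hv']
      push_cast
      rw [add_mul, Complex.exp_add, Complex.exp_two_pi_mul_I, mul_one, ← hv']
    rw [e] at this
    have h2 : |θ - (v.arg + 2 * Real.pi)| ≤ 1 - r := abs_le.2 ⟨by linarith [hθ.1], by linarith [hθ.2]⟩
    linarith

def Eset (v : ℂ) (c d : ℝ) : Set ℂ := {ζ | ‖v - ζ‖ ≤ c * (1 - ‖ζ‖) ∧ 2 * d ≤ 1 - ‖ζ‖ ∧ 1 - ‖ζ‖ ≤ 4 * d}

lemma measurableSet_Eset (v : ℂ) (c d : ℝ) : MeasurableSet (Eset v c d) := by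
  have h1 : MeasurableSet {ζ : ℂ | ‖v - ζ‖ ≤ c * (1 - ‖ζ‖)} :=
    measurableSet_le (by fun_prop) (by fun_prop)
  have h2 : MeasurableSet {ζ : ℂ | 2 * d ≤ 1 - ‖ζ‖} := measurableSet_le (by fun_prop) (by fun_prop)
  have h3 : MeasurableSet {ζ : ℂ | 1 - ‖ζ‖ ≤ 4 * d} := measurableSet_le (by fun_prop) (by fun_prop)
  exact h1.inter (h2.inter h3)

lemma lower_j {v : ℂ} (hv : ‖v‖ = 1) {r c κ p : ℝ} (hp : 1 < p) (hr : 1 / 2 ≤ r) (hr1 : r < 1) (hc : 1 ≤ c)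
    (hκ : κ = 1 / 2 * Real.log (1 + 1 / (18 * c ^ 2))) (ν : Measure ℂ) :
    ENNReal.ofReal (1 - r) * (ENNReal.ofReal κ * ν (Eset v c (1 - r))) ^ p ≤
      ∫⁻ θ in Set.Ioc 0 (2 * Real.pi), Fpot ν (circ r θ) ^ p := by
  obtain ⟨a, ha1, ha2⟩ := arc_exists hv hr hr1
  have hF : ∀ θ ∈ Set.Ioc a (a + (1 - r)), ENNReal.ofReal κ * ν (Eset v c (1 - r)) ≤ Fpot ν (circ r θ) := by
    intro θ hθ
    rw [Fpot, ← setLIntegral_const]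
    refine le_trans ?_ (setLIntegral_le_lintegral (Eset v c (1 - r)) _)
    apply setLIntegral_mono' (measurableSet_Eset _ _ _)
    rintro ζ ⟨h1, h2, h3⟩
    apply ENNReal.ofReal_le_ofReal
    apply gk_low (d := 1 - r) (c := c) (by linarith) (by linarith) hc _ h2 _ hκ
    · rw [norm_circ (by linarith)]; ring
    · have := norm_sub_le_norm_sub_add_norm_sub (circ r θ) v ζ
      have h4 := ha2 θ hθ
      have h5 : c * (1 - ‖ζ‖) ≤ c * (4 * (1 - r)) := by gcongr
      nlinarith
  calc _ = ∫⁻ θ in Set.Ioc a (a + (1 - r)), (ENNReal.ofReal κ * ν (Eset v c (1 - r))) ^ p := by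
        rw [setLIntegral_const, Real.volume_Ioc, mul_comm]; congr 2; ring
    _ ≤ ∫⁻ θ in Set.Ioc a (a + (1 - r)), Fpot ν (circ r θ) ^ p := by
        apply setLIntegral_mono' measurableSet_Ioc
        intro θ hθ
        exact ENNReal.rpow_le_rpow (hF θ hθ) (by linarith)
    _ ≤ _ := lintegral_mono_set ha1

lemma recur {f : ℝ → ℝ} {β C s0 : ℝ} (hβ : 0 < β) (hC : 0 ≤ C) (hs0 : 0 < s0) (hs1 : s0 ≤ 1)
    (hf0 : ∀ s, 1 < s → f s = 0) (hmono : ∀ s t, s ≤ t → t ≤ 1 → 0 < s → f t ≤ f s) (hf : 0 ≤ f s0)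
    (hrec : ∀ s, 0 < s → s < s0 → f s ≤ f (2 * s) + C * s ^ (-β)) :
    ∃ A : ℝ, 0 ≤ A ∧ ∀ s, 0 < s → f s ≤ A * s ^ (-β) := by
  have hb : (2 : ℝ) ^ (-β) < 1 := Real.rpow_lt_one_of_one_lt_of_neg (by norm_num) (by linarith)
  set A := f s0 + C / (1 - 2 ^ (-β)) with hA
  have hCA : 0 ≤ C / (1 - 2 ^ (-β)) := div_nonneg hC (by linarith)
  have hA0 : 0 ≤ A := by positivity
  have key : ∀ k : ℕ, ∀ s, 0 < s → s0 ≤ 2 ^ k * s → f s ≤ A * s ^ (-β) := by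
    have base : ∀ s, s0 ≤ s → f s ≤ A * s ^ (-β) := by
      intro s hs
      have hs' : 0 < s := by linarith
      rcases lt_or_ge 1 s with h | h
      · rw [hf0 s h]; positivity
      · have h1 : 1 ≤ s ^ (-β) := Real.one_le_rpow_of_pos_of_le_one_of_nonpos hs' h (by linarith)
        have h2 := hmono s0 s hs h hs0
        nlinarith
    intro k
    induction k with
    | zero => intro s _ hs; exact base s (by simpa using hs)
    | succ k ih =>
      intro s hs h
      rcases le_or_gt s0 s with h' | h'
      · exact base s h'
      · have h1 := ih (2 * s) (by linarith) (by rw [pow_succ] at h; linarith)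
        have h2 := hrec s hs h'
        rw [Real.mul_rpow (by norm_num) hs.le] at h1
        have h3 : C ≤ A * (1 - 2 ^ (-β)) := by
          rw [hA, add_mul, div_mul_cancel₀ _ (by linarith)]
          nlinarith
        have h4 : 0 < s ^ (-β) := by positivity
        nlinarith
  refine ⟨A, hA0, fun s hs => ?_⟩
  obtain ⟨k, hk⟩ := pow_unbounded_of_one_lt (s0 / s) (one_lt_two)
  exact key k s hs ((div_lt_iff₀ hs).1 hk).le

/-- For a Green potential `u(z) = ∫_𝔻 log(|z-ζ|/|1-z·conj ζ|) dμ(ζ)`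
whose Riesz measure `μ` is supported in a finite union of Stolz angles with
vertices on `∂𝔻`, with `α ∈ [0,1)`, `p ∈ (1,∞)`, `α + 1/p < 1`:
`m_p(r,u) = O((1-r)^{-α})` as `r ↑ 1` iff
`n(r,u) = μ(closedBall 0 r) = O((1-r)^{-α-1/p})` as `r ↑ 1`. -/
theorem stmt2 (u : ℂ → ℝ) (μ : Measure ℂ) (α p : ℝ) (hα0 : 0 ≤ α) (hα1 : α < 1)
    (hp : 1 < p) (hαp : α + 1 / p < 1)
    -- `μ` is a positive Borel measure on `𝔻` with `∫_𝔻 (1-|ζ|) dμ(ζ) < ∞`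
    (hμD : μ (Metric.ball (0 : ℂ) 1)ᶜ = 0)
    (hμfin : ∫⁻ ζ in Metric.ball (0 : ℂ) 1, ENNReal.ofReal (1 - ‖ζ‖) ∂μ < ⊤)
    -- `u` is the Green potential of `μ`
    (hrep : ∀ z ∈ Metric.ball (0 : ℂ) 1,
      u z = ∫ ζ in Metric.ball (0 : ℂ) 1,
        Real.log (‖z - ζ‖ / ‖1 - z * (starRingEnd ℂ) ζ‖) ∂μ)
    -- `supp μ` is contained in a finite union of Stolz angles with vertices on `∂𝔻`
    (N : ℕ) (ζs : Fin N → ℂ) (hζs : ∀ j, ‖ζs j‖ = 1) (c : ℝ) (hc : 1 ≤ c)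
    (hsupp : μ (⋃ j, {z : ℂ | ‖ζs j - z‖ ≤ c * (1 - ‖z‖)})ᶜ = 0) :
    (∃ C₁ : ℝ, ∃ r₀ ∈ Set.Ico (0 : ℝ) 1, ∀ r ∈ Set.Ioo r₀ 1,
        mpMean p r u ≤ C₁ * (1 - r) ^ (-α)) ↔
      (∃ C₂ : ℝ, ∃ r₀ ∈ Set.Ico (0 : ℝ) 1, ∀ r ∈ Set.Ioo r₀ 1,
        (μ (Metric.closedBall (0 : ℂ) r)).toReal ≤ C₂ * (1 - r) ^ (-α - 1 / p)) := by
  have hres : μ.restrict (Metric.ball (0 : ℂ) 1) = μ := by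
    rw [Measure.restrict_eq_self_of_ae_mem]
    exact hμD
  rw [hres] at hμfin
  simp only [hres] at hrep
  have hν : ∀ᵐ ζ ∂μ, ‖ζ‖ < 1 := by
    have : ∀ᵐ ζ ∂μ, ζ ∈ Metric.ball (0 : ℂ) 1 := hμD
    filter_upwards [this] with ζ hζ
    simpa using hζ
  have hσ : SigmaFinite μ := ν_sigma μ hν hμfin
  have hp0 : 0 < p := by linarith
  have hip : 0 < 1 / p := by positivity
  have hpi := Real.pi_pos
  obtain ⟨Cm, hCm, hup⟩ := main_upper hp μ hν hμfin
  have hLfin : ∀ r : ℝ, 1 / 2 ≤ r → r < 1 →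
      ∫⁻ θ in Set.Ioc 0 (2 * Real.pi), Fpot μ (circ r θ) ^ p < ⊤ := fun r hr hr1 =>
    lt_of_le_of_lt (hup r hr hr1) (ENNReal.mul_lt_top hCm
      (ENNReal.rpow_lt_top_of_nonneg hp0.le (w_fin hp μ hν hμfin (by linarith)).ne))
  set β := α + 1 / p with hβ
  have hβ0 : 0 < β := by linarith
  have hβe : -α - 1 / p = -β := by rw [hβ]; ring
  rw [hβe]
  have hbf : ∀ s : ℝ, 0 < s → μ (Metric.closedBall 0 (1 - s)) ≠ ⊤ := fun s hs =>
    (ball_fin μ hμfin (by linarith)).ne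
  have hmono : ∀ s t : ℝ, s ≤ t → t ≤ 1 → 0 < s →
      (μ (Metric.closedBall (0:ℂ) (1 - t))).toReal ≤ (μ (Metric.closedBall (0:ℂ) (1 - s))).toReal := by
    intro s t hst _ hs
    exact ENNReal.toReal_mono (hbf s hs) (measure_mono (Metric.closedBall_subset_closedBall (by linarith)))
  have hf0 : ∀ s : ℝ, 1 < s → (μ (Metric.closedBall (0:ℂ) (1 - s))).toReal = 0 := by
    intro s hs
    rw [Metric.closedBall_eq_empty.2 (by linarith)]; simp
  constructor
  · rintro ⟨C₁, r₀, hr₀, h⟩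
    set C := max C₁ 0 with hC
    have hC0 : 0 ≤ C := le_max_right _ _
    set κ := 1 / 2 * Real.log (1 + 1 / (18 * c ^ 2)) with hκ
    have hκ0 : 0 < κ := by
      have : 0 < Real.log (1 + 1 / (18 * c ^ 2)) := by
        apply Real.log_pos
        have : 0 < 1 / (18 * c ^ 2) := by positivity
        linarith
      positivity
    set G := (2 * Real.pi) ^ (1 / p) * C / κ with hG
    have hG0 : 0 ≤ G := by positivity
    have hE : ∀ r, 1 / 2 ≤ r → r₀ < r → r < 1 → ∀ j, μ (Eset (ζs j) c (1 - r)) ≤ ENNReal.ofReal (G * (1 - r) ^ (-β)) := by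
      intro r hr hr0 hr1 j
      set d := 1 - r with hd
      have hd0 : 0 < d := by linarith
      have hl := lower_j (hζs j) hp hr hr1 hc hκ μ
      rw [← hd] at hl
      have hfinE : μ (Eset (ζs j) c d) ≠ ⊤ := by
        apply ne_top_of_le_ne_top (hbf (2 * d) (by linarith))
        apply measure_mono
        rintro ζ ⟨_, h2, _⟩
        simp only [Metric.mem_closedBall, dist_zero_right]
        linarith
      set x := (μ (Eset (ζs j) c d)).toReal with hx
      have hx0 : 0 ≤ x := ENNReal.toReal_nonneg
      have hmp := mp_eq hp (by linarith) hr1 μ hν u hrep (hLfin r hr hr1)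
      have hle := h r ⟨hr0, hr1⟩
      have hl2 := ENNReal.toReal_mono (hLfin r hr hr1).ne hl
      set L := (∫⁻ θ in Set.Ioc 0 (2 * Real.pi), Fpot μ (circ r θ) ^ p).toReal with hL
      have hL0 : 0 ≤ L := ENNReal.toReal_nonneg
      rw [ENNReal.toReal_mul, ← ENNReal.toReal_rpow, ENNReal.toReal_mul, ENNReal.toReal_ofReal hd0.le,
        ENNReal.toReal_ofReal hκ0.le, ← hx] at hl2
      have hle2 : (1 / (2 * Real.pi) * L) ^ (1 / p) ≤ C * d ^ (-α) := by
        rw [← hmp]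
        refine hle.trans ?_
        have := le_max_left C₁ 0
        gcongr
      have hle3 : 1 / (2 * Real.pi) * L ≤ (C * d ^ (-α)) ^ p := by
        have := Real.rpow_le_rpow (by positivity) hle2 hp0.le
        rwa [← Real.rpow_mul (by positivity), one_div_mul_cancel hp0.ne', Real.rpow_one] at this
      have hle4 : (κ * x) ^ p ≤ ((2 * Real.pi) ^ (1 / p) * C * d ^ (-β)) ^ p := by
        have e : ((2 * Real.pi) ^ (1 / p) * C * d ^ (-β)) ^ p = (2 * Real.pi) * (C * d ^ (-α)) ^ p / d := by
          have e1 : d ^ (-β) = d ^ (-α) * d ^ (-(1 / p)) := by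
            rw [← Real.rpow_add hd0, hβ]; congr 1; ring
          have e2 : (2 * Real.pi) ^ (1 / p) * C * d ^ (-β) = (2 * Real.pi) ^ (1 / p) * (C * d ^ (-α)) * d ^ (-(1 / p)) := by
            rw [e1]; ring
          rw [e2, Real.mul_rpow (by positivity) (by positivity), Real.mul_rpow (by positivity) (by positivity),
            ← Real.rpow_mul (by positivity), ← Real.rpow_mul hd0.le, neg_mul, one_div_mul_cancel hp0.ne',
            Real.rpow_one, Real.rpow_neg_one, div_eq_mul_inv]
        rw [e, le_div_iff₀ hd0]
        have : L ≤ 2 * Real.pi * (C * d ^ (-α)) ^ p := by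
          have := mul_le_mul_of_nonneg_left hle3 (by positivity : 0 ≤ 2 * Real.pi)
          rwa [← mul_assoc, mul_one_div_cancel (by positivity), one_mul] at this
        linarith
      have hle5 := (Real.rpow_le_rpow_iff (by positivity) (by positivity) hp0).1 hle4
      rw [← ENNReal.ofReal_toReal hfinE, ← hx]
      apply ENNReal.ofReal_le_ofReal
      rw [hG, div_mul_eq_mul_div, le_div_iff₀ hκ0]
      linarith
    have hrec : ∀ s, 0 < s → s < 1 - r₀ → s ≤ 1 →
        (μ (Metric.closedBall (0:ℂ) (1 - s))).toReal ≤ (μ (Metric.closedBall (0:ℂ) (1 - 2 * s))).toReal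
          + (N * G * 2 ^ β) * s ^ (-β) := by
      intro s hs hs1 hs2
      have hcov : μ (Metric.closedBall (0:ℂ) (1 - s)) ≤ μ (Metric.closedBall (0:ℂ) (1 - 2 * s)) +
          ∑ j, μ (Eset (ζs j) c (s / 2)) := by
        calc μ (Metric.closedBall (0:ℂ) (1 - s)) ≤ μ (Metric.closedBall (0:ℂ) (1 - 2 * s) ∪
              (⋃ j, Eset (ζs j) c (s / 2))) := by
              apply measure_mono_ae
              have : ∀ᵐ ζ ∂μ, ζ ∈ ⋃ j, {z : ℂ | ‖ζs j - z‖ ≤ c * (1 - ‖z‖)} := hsupp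
              filter_upwards [this] with ζ hζ hζs
              have hζs : ‖ζ‖ ≤ 1 - s := by
                have : ζ ∈ Metric.closedBall (0:ℂ) (1 - s) := hζs
                simpa using this
              rw [Set.mem_iUnion] at hζ
              obtain ⟨j, hj⟩ := hζ
              by_cases hb : ‖ζ‖ ≤ 1 - 2 * s
              · left; simpa using hb
              · right
                refine Set.mem_iUnion.2 ⟨j, hj, by linarith, by linarith⟩
          _ ≤ _ := (measure_union_le _ _).trans (by gcongr; exact measure_iUnion_fintype_le _ _)
      have hsum : ∑ j, μ (Eset (ζs j) c (s / 2)) ≤ ENNReal.ofReal ((N * G * 2 ^ β) * s ^ (-β)) := by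
        calc ∑ j, μ (Eset (ζs j) c (s / 2)) ≤ ∑ _j : Fin N, ENNReal.ofReal (G * (s / 2) ^ (-β)) := by
              apply Finset.sum_le_sum
              intro j _
              have := hE (1 - s / 2) (by linarith) (by linarith) (by linarith) j
              rwa [sub_sub_cancel] at this
          _ = _ := by
              rw [Finset.sum_const, Finset.card_univ, Fintype.card_fin, nsmul_eq_mul,
                ← ENNReal.ofReal_natCast, ← ENNReal.ofReal_mul (by positivity)]
              congr 1
              rw [Real.div_rpow hs.le (by norm_num), Real.rpow_neg (x := 2) (by norm_num)]
              field_simp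
      have hfin2 : μ (Metric.closedBall (0:ℂ) (1 - 2 * s)) ≠ ⊤ := hbf _ (by linarith)
      have := ENNReal.toReal_mono (ENNReal.add_ne_top.2 ⟨hfin2, ENNReal.ofReal_ne_top⟩)
        (hcov.trans (add_le_add le_rfl hsum))
      rwa [ENNReal.toReal_add hfin2 ENNReal.ofReal_ne_top, ENNReal.toReal_ofReal (by positivity)] at this
    obtain ⟨A, hA0, hA⟩ := recur (f := fun s => (μ (Metric.closedBall (0:ℂ) (1 - s))).toReal)
      (β := β) (C := N * G * 2 ^ β) (s0 := 1 - r₀) hβ0 (by positivity) (by linarith [hr₀.2]) (by linarith [hr₀.1])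
      hf0 hmono ENNReal.toReal_nonneg (fun s hs h' => hrec s hs h' (by linarith [hr₀.1]))
    refine ⟨A, r₀, hr₀, fun r hr => ?_⟩
    have := hA (1 - r) (by linarith [hr.2])
    simpa using this
  · rintro ⟨C₂, r₀, hr₀, h⟩
    set r₁ := (1 + r₀) / 2 with hr₁
    have hr₁' : r₁ < 1 := by linarith [hr₀.2]
    set Q := (μ (Metric.closedBall (0:ℂ) r₁)).toReal with hQ
    have hQ0 : 0 ≤ Q := ENNReal.toReal_nonneg
    set C := max C₂ 0 + Q with hC
    have hC0 : 0 ≤ C := by positivity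
    have hn : ∀ s : ℝ, 0 < s → μ (Metric.closedBall 0 (1 - s)) ≤ ENNReal.ofReal (C * s ^ (-β)) := by
      intro s hs
      rw [← ENNReal.ofReal_toReal (hbf s hs)]
      apply ENNReal.ofReal_le_ofReal
      rcases lt_or_ge 1 s with h1 | h1
      · rw [hf0 s h1]; positivity
      · rcases lt_or_ge r₀ (1 - s) with h2 | h2
        · have := h (1 - s) ⟨h2, by linarith⟩
          rw [sub_sub_cancel] at this
          refine this.trans ?_
          have : C₂ ≤ C := by linarith [le_max_left C₂ 0]
          gcongr
        · have h3 := hmono (1 - r₁) s (by linarith [hr₀.2]) h1 (by linarith)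
          rw [sub_sub_cancel, ← hQ] at h3
          have h4 : 1 ≤ s ^ (-β) := Real.one_le_rpow_of_pos_of_le_one_of_nonpos hs h1 (by linarith)
          have h5 : Q ≤ C := by linarith [le_max_right C₂ 0]
          nlinarith
    obtain ⟨M, hM0, hM⟩ := w_int hp hβ hβ0 hαp μ hν C hC0 hn
    refine ⟨(1 / (2 * Real.pi) * Cm.toReal) ^ (1 / p) * M, 1 / 2, ⟨by norm_num, by norm_num⟩, fun r hr => ?_⟩
    have hd0 : 0 < 1 - r := by linarith [hr.2]
    have hr' : 1 / 2 ≤ r := hr.1.le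
    rw [mp_eq hp (by linarith) hr.2 μ hν u hrep (hLfin r hr' hr.2)]
    have h1 : ∫⁻ θ in Set.Ioc 0 (2 * Real.pi), Fpot μ (circ r θ) ^ p ≤ Cm * ENNReal.ofReal (M * (1 - r) ^ (-α)) ^ p :=
      (hup r hr' hr.2).trans (by gcongr; exact hM _ hd0)
    have hW : 0 ≤ M * (1 - r) ^ (-α) := by positivity
    have h2 := ENNReal.toReal_mono (ENNReal.mul_ne_top hCm.ne
      (ENNReal.rpow_ne_top_of_nonneg hp0.le ENNReal.ofReal_ne_top)) h1
    rw [ENNReal.toReal_mul, ← ENNReal.toReal_rpow, ENNReal.toReal_ofReal hW] at h2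
    have hCm0 : 0 ≤ Cm.toReal := ENNReal.toReal_nonneg
    calc _ ≤ (1 / (2 * Real.pi) * (Cm.toReal * (M * (1 - r) ^ (-α)) ^ p)) ^ (1 / p) := by gcongr
      _ = _ := by
        rw [← mul_assoc, Real.mul_rpow (by positivity) (by positivity), ← Real.rpow_mul hW,
          mul_one_div_cancel hp0.ne', Real.rpow_one]
        ring
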